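/- Let n ≥ 2, d > 0, and h : [0,d] → [0,∞) be a function with h^{1/(n−1)} concave and h not identically zero. Set H := {f ∈ W^{1,2}(0,d) : ∫₀^d hf = 0} and, for f ∈ H with f ≠ 0, R(f) := ∫₀^d h(f')² / ∫₀^d hf². Then there exists φ ∈ H \ {0} with R(φ) = min over f ∈ H \ {0} of R(f), and this minimizer satisfies the weak Euler–Lagrange equation ∫₀^d φ'·v'·h dt = R(φ)·∫₀^d φ·v·h dt for every v ∈ W^{1,2}(0,d). -/

import Mathlib

/-!
The Rayleigh quotient `R f = ∫ h f'² / ∫ h f²` is minimized through a dual problem in which no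
weighted Sobolev space appears. Write `F = ∫₀ᵗ √h u` for `u ∈ L²(0,d)`; for `u = √h f` the condition
`∫ h f = 0` says `F 0 = F d = 0`. Integration by parts, `∫ h f² = -∫ f' F`, and Young's inequality show
that the best constant in `∫ h f² ≤ κ ∫ h f'²` is at most the maximum `κ` of
`Q u = ∫ F² / h` on the unit ball of `{F d = 0}` (`Weight.poincare`), and `κ > 0` because no such
inequality can hold with arbitrarily small constants (`Weight.kappa_pos`).

Concavity of `h ^ (1/(n-1))` enters only through `h s ≤ C h t` whenever `t` lies between `s` and the
midpoint `d/2` (`weight_of_concave`). With Cauchy–Schwarz this bounds `F² / h` uniformly on the unit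
ball, so that `Q` is weakly sequentially continuous there by dominated convergence and the maximum is
attained (`Weight.exists_maximizer`).

The stationarity condition `Q(u, v) = κ ⟪u, v⟫`, tested against compactly supported perturbations,
gives the du Bois-Reymond conclusion that `u = √h φ` a.e., where `F' = h φ` and `φ' = -F / (κ h)`
on `(0,d)` (`Weight.regularity`). A `C¹` function on the closed interval requires the flux quotient
`F / h` to have limits at the endpoints, where `h` may vanish. Iterating the two first-order relations
improves the Cauchy–Schwarz bound `|F| ≤ A √M`, `M = ∫₀ᵗ h`, to `|F| ≤ c M`, and `M ≤ C t h`
then yields `F / h → 0` (`left_decay`, and its reflection at the other end).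
Finally the weak Euler–Lagrange equation is one integration by parts with `F 0 = F d = 0`
(`Weight.weak_equation`); it gives `R φ = 1 / κ`, which `Weight.poincare` shows to be minimal.
-/

open MeasureTheory Real Set
open Filter Topology
open scoped InnerProductSpace

/-! ### Weights controlled towards the midpoint -/

/-- A positive continuous weight on `(0,d)` that, up to the factor `C`, does not increase when moving
from the midpoint `d/2` towards either endpoint. No condition is imposed at the endpoints. -/
structure Weight (d : ℝ) (h : ℝ → ℝ) (C : ℝ) : Prop where
  d_pos : 0 < d
  pos : ∀ x ∈ Ioo 0 d, 0 < h x
  cont : ContinuousOn h (Ioo 0 d)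
  left : ∀ s t, 0 < s → s ≤ t → t ≤ d / 2 → h s ≤ C * h t
  right : ∀ s t, d / 2 ≤ t → t ≤ s → s < d → h s ≤ C * h t

/-- With `p = h ^ (1/(n-1))` concave and nonnegative, chords to the far endpoint give `p s ≤ 2 p t`
for `t` between `s` and the midpoint; the constant is the `(n-1)`-st power of this `2`. -/
lemma weight_of_concave (n : ℕ) (d : ℝ) (h : ℝ → ℝ)
    (hn : 2 ≤ n) (hd : 0 < d)
    (hnonneg : ∀ x ∈ Icc 0 d, 0 ≤ h x)
    (hconc : ConcaveOn ℝ (Icc 0 d) (fun x => h x ^ ((1 : ℝ) / ((n : ℝ) - 1))))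
    (hnz : ∃ x ∈ Icc 0 d, h x ≠ 0) : Weight d h (2 ^ ((n : ℝ) - 1)) := by
  have hm : (0 : ℝ) < (n : ℝ) - 1 := by
    have : (2 : ℝ) ≤ n := by exact_mod_cast hn
    linarith
  set m : ℝ := (n : ℝ) - 1 with hmdef
  set p : ℝ → ℝ := fun x => h x ^ ((1 : ℝ) / m) with hp
  have hp0 : ∀ x ∈ Icc 0 d, 0 ≤ p x := fun x hx => rpow_nonneg (hnonneg x hx) _
  have hph : ∀ x ∈ Icc 0 d, h x = p x ^ m := by
    intro x hx
    simp only [hp]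
    rw [← rpow_mul (hnonneg x hx), one_div, inv_mul_cancel₀ hm.ne', rpow_one]
  -- the chord from `s` to an endpoint `e` on which `p` is nonnegative
  have key : ∀ s ∈ Icc 0 d, ∀ e ∈ Icc 0 d, ∀ c, 0 ≤ c → c ≤ 1 →
      c * p s ≤ p (c * s + (1 - c) * e) := by
    intro s hs e he c h0 h1
    have := hconc.2 hs he h0 (sub_nonneg.2 h1) (by ring)
    simp only [smul_eq_mul] at this
    have h2 := mul_nonneg (sub_nonneg.2 h1) (hp0 e he)
    simp only [hp] at h2 ⊢
    linarith
  have two : ∀ s ∈ Icc 0 d, ∀ t ∈ Icc 0 d, p s ≤ 2 * p t → h s ≤ 2 ^ m * h t := by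
    intro s hs t ht hst
    rw [hph s hs, hph t ht, ← mul_rpow (by norm_num) (hp0 t ht)]
    exact rpow_le_rpow (hp0 s hs) hst hm.le
  have hl : (0 : ℝ) ∈ Icc 0 d := ⟨le_rfl, hd.le⟩
  have hr : d ∈ Icc 0 d := ⟨hd.le, le_rfl⟩
  refine ⟨hd, ?_, ?_, ?_, ?_⟩
  · intro t ht
    obtain ⟨x, hx, hx0⟩ := hnz
    have hpx : 0 < p x := rpow_pos_of_pos (lt_of_le_of_ne (hnonneg x hx) (Ne.symm hx0)) _
    have htI : t ∈ Icc 0 d := ⟨ht.1.le, ht.2.le⟩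
    have : 0 < p t := by
      rcases le_or_gt t x with htx | htx
      · have hx' : 0 < x := lt_of_lt_of_le ht.1 htx
        have := key x hx 0 hl (t / x) (by have := ht.1; positivity) ((div_le_one hx').2 htx)
        rw [div_mul_cancel₀ _ hx'.ne', mul_zero, add_zero] at this
        have h3 : 0 < t / x * p x := by have := ht.1; positivity
        linarith
      · have hx' : 0 < d - x := by linarith [ht.2]
        have := key x hx d hr ((d - t) / (d - x)) (by have := ht.2; apply div_nonneg <;> linarith)
          ((div_le_one hx').2 (by linarith))
        have e : (d - t) / (d - x) * x + (1 - (d - t) / (d - x)) * d = t := by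
          field_simp; ring
        rw [e] at this
        have h3 : 0 < (d - t) / (d - x) * p x := by
          have : 0 < d - t := by linarith [ht.2]
          positivity
        linarith
    rw [hph t htI]
    exact rpow_pos_of_pos this _
  · have hc := hconc.continuousOn_interior
    rw [interior_Icc] at hc
    have : ContinuousOn (fun x => p x ^ m) (Ioo 0 d) := hc.rpow_const (fun x _ => Or.inr hm.le)
    exact this.congr (fun x hx => hph x ⟨hx.1.le, hx.2.le⟩)
  · intro s t hs hst ht
    have hsI : s ∈ Icc 0 d := ⟨hs.le, by linarith⟩
    refine two s hsI t ⟨by linarith, by linarith⟩ ?_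
    have hx' : 0 < d - s := by linarith
    have := key s hsI d hr ((d - t) / (d - s)) (by apply div_nonneg <;> linarith)
          ((div_le_one hx').2 (by linarith))
    have e : (d - t) / (d - s) * s + (1 - (d - t) / (d - s)) * d = t := by
      field_simp; ring
    rw [e] at this
    have h3 : 1 / 2 ≤ (d - t) / (d - s) := by
      rw [div_le_div_iff₀ (by norm_num) hx']; linarith
    nlinarith [hp0 s hsI]
  · intro s t ht hst hs
    have hsI : s ∈ Icc 0 d := ⟨by linarith, hs.le⟩
    refine two s hsI t ⟨by linarith, by linarith⟩ ?_
    have hx' : 0 < s := by linarith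
    have := key s hsI 0 hl (t / s) (by apply div_nonneg <;> linarith)
          ((div_le_one hx').2 (by linarith))
    rw [div_mul_cancel₀ _ hx'.ne', mul_zero, add_zero] at this
    have h3 : 1 / 2 ≤ t / s := by
      rw [div_le_div_iff₀ (by norm_num) hx']; linarith
    nlinarith [hp0 s hsI]

/-! ### Decay of the flux at a degenerate endpoint -/

/-- Bootstrap at the left endpoint, where `M` is the mass `∫₀ᵗ h`. A bound `|F| ≤ p M + q √M`
integrates to a bound on `φ`, and once more to `|F| ≤ (c + p/4) M + (q/2) √M`
near `0`. Iteration removes the `√M` term, and `M ≤ C t h` finishes. -/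
lemma left_decay {d C lam A : ℝ} {h M φ F : ℝ → ℝ} (W : Weight d h C) (hlam : 0 ≤ lam)
    (hM : ∀ t ∈ Ioo 0 d, HasDerivAt M (h t) t) (hMpos : ∀ t ∈ Ioo 0 d, 0 < M t)
    (hM0 : Tendsto M (𝓝[>] 0) (𝓝 0)) (hMb : ∀ t, 0 < t → t ≤ d / 2 → M t ≤ C * t * h t)
    (hφ : ∀ t ∈ Ioo 0 d, HasDerivAt φ (-lam * F t / h t) t)
    (hF : ∀ t ∈ Ioo 0 d, HasDerivAt F (h t * φ t) t) (hA : 0 ≤ A)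
    (hFA : ∀ t ∈ Ioo 0 d, |F t| ≤ A * √(M t)) :
    Tendsto (fun t => F t / h t) (𝓝[>] 0) (𝓝 0) := by
  have hd := W.d_pos
  have hC : 0 < C := by
    have h1 := W.left (d / 2) (d / 2) (by linarith) le_rfl le_rfl
    have h2 := W.pos (d / 2) ⟨by linarith, by linarith⟩
    by_contra hc
    nlinarith
  have hS0 : Tendsto (fun t => √(M t)) (𝓝[>] 0) (𝓝 0) := by
    simpa using hM0.sqrt
  have hF0 : Tendsto F (𝓝[>] 0) (𝓝 0) := by
    refine squeeze_zero_norm' ?_ (by simpa using hS0.const_mul A)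
    filter_upwards [Ioo_mem_nhdsGT hd] with t ht using hFA t ht
  -- on `(0, t0]` the two integrations together contract by the factor `1/4`
  obtain ⟨t0, ht0, ht0d, ht0s⟩ : ∃ t0, 0 < t0 ∧ t0 ≤ d / 2 ∧ lam * C * t0 * t0 ≤ 1 / 4 := by
    have h1 : Tendsto (fun t : ℝ => lam * C * t * t) (𝓝[>] 0) (𝓝 0) := by
      have : Continuous (fun t : ℝ => lam * C * t * t) := by fun_prop
      simpa using (this.tendsto 0).mono_left nhdsWithin_le_nhds
    have h2 := h1.eventually (gt_mem_nhds (show (0:ℝ) < 1 / 4 by norm_num))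
    obtain ⟨t, ht, ht'⟩ := (h2.and (Ioo_mem_nhdsGT (half_pos hd))).exists
    exact ⟨t, ht'.1, ht'.2.le, ht.le⟩
  have hsub : ∀ t ∈ Ioc 0 t0, t ∈ Ioo 0 d := fun t ht => ⟨ht.1, by linarith [ht.2]⟩
  have hmono : ∀ s ∈ Ioc 0 t0, ∀ t ∈ Ioc 0 t0, s ≤ t → M s ≤ M t := by
    have : MonotoneOn M (Ioc 0 t0) := by
      refine monotoneOn_of_deriv_nonneg (convex_Ioc 0 t0)
        (fun t ht => (hM t (hsub t ht)).continuousAt.continuousWithinAt)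
        (fun t ht => (hM t (hsub t (interior_subset ht))).differentiableAt.differentiableWithinAt)
        (fun t ht => ?_)
      rw [(hM t (hsub t (interior_subset ht))).deriv]
      exact (W.pos t (hsub t (interior_subset ht))).le
    exact fun s hs t ht hst => this hs ht hst
  set c := |φ t0| with hc
  -- a function with nonnegative derivative and limit `0` at `0` is nonnegative
  have nonneg_of : ∀ D D' : ℝ → ℝ, (∀ t ∈ Ioc 0 t0, HasDerivAt D (D' t) t) →
      (∀ t ∈ Ioc 0 t0, 0 ≤ D' t) → Tendsto D (𝓝[>] 0) (𝓝 0) → ∀ t ∈ Ioc 0 t0, 0 ≤ D t := by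
    intro D D' hD hD' h0 t ht
    have hmon : MonotoneOn D (Ioc 0 t0) := by
      refine monotoneOn_of_deriv_nonneg (convex_Ioc 0 t0)
        (fun t ht => (hD t ht).continuousAt.continuousWithinAt)
        (fun t ht => (hD t (interior_subset ht)).differentiableAt.differentiableWithinAt)
        (fun t ht => ?_)
      rw [(hD t (interior_subset ht)).deriv]
      exact hD' t (interior_subset ht)
    refine le_of_tendsto h0 ?_
    filter_upwards [Ioo_mem_nhdsGT ht.1] with s hs
    exact hmon ⟨hs.1, hs.2.le.trans ht.2⟩ ht hs.2.le
  -- `p = 2c` is preserved up to slack by one step, while `q` is halved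
  have step : ∀ p q : ℝ, 0 ≤ p → 0 ≤ q → (∀ t ∈ Ioc 0 t0, |F t| ≤ p * M t + q * √(M t)) →
      ∀ t ∈ Ioc 0 t0, |F t| ≤ (c + p / 4) * M t + (q / 2) * √(M t) := by
    intro p q hp hq hpq
    have hφb : ∀ s ∈ Ioc 0 t0, |φ s| ≤ c + p / 4 + q / 4 / √(M s) := by
      intro s hs
      have hMs := hMpos s (hsub s hs)
      have hIcc : ∀ t ∈ Icc s t0, t ∈ Ioc 0 t0 := fun t ht => ⟨hs.1.trans_le ht.1, ht.2⟩
      have hder : ∀ t ∈ Icc s t0, ‖-lam * F t / h t‖ ≤ lam * (C * t0) * (p + q / √(M s)) := by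
        intro t ht
        have ht' := hIcc t ht
        have hh := W.pos t (hsub t ht')
        have hMt := hMpos t (hsub t ht')
        have e1 : |F t| ≤ M t * (p + q / √(M s)) := by
          refine (hpq t ht').trans ?_
          have e2 : √(M s) ≤ √(M t) := sqrt_le_sqrt (hmono s hs t ht' ht.1)
          have e3 : 0 < √(M s) := sqrt_pos.2 hMs
          have e4 : √(M t) ≤ M t / √(M s) := by
            rw [le_div_iff₀ e3]
            calc √(M t) * √(M s) ≤ √(M t) * √(M t) := by gcongr
              _ = M t := mul_self_sqrt hMt.le
          calc p * M t + q * √(M t) ≤ p * M t + q * (M t / √(M s)) := by gcongr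
            _ = M t * (p + q / √(M s)) := by ring
        have e5 : |F t| / h t ≤ C * t0 * (p + q / √(M s)) := by
          rw [div_le_iff₀ hh]
          have hk : 0 ≤ p + q / √(M s) := by positivity
          have h6 : M t ≤ C * t0 * h t := (hMb t ht'.1 (ht'.2.trans ht0d)).trans (by
            have := ht'.2
            gcongr)
          calc |F t| ≤ M t * (p + q / √(M s)) := e1
            _ ≤ C * t0 * h t * (p + q / √(M s)) := by gcongr
            _ = _ := by ring
        rw [norm_div, norm_mul, norm_neg, Real.norm_of_nonneg hlam, Real.norm_of_nonneg hh.le,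
          Real.norm_eq_abs, mul_div_assoc, mul_assoc lam]
        gcongr
      have := (convex_Icc s t0).norm_image_sub_le_of_norm_hasDerivWithin_le
        (fun t ht => (hφ t (hsub t (hIcc t ht))).hasDerivWithinAt) hder
        (right_mem_Icc.2 hs.2) (left_mem_Icc.2 hs.2)
      have hk : 0 ≤ p + q / √(M s) := by positivity
      have h7 : ‖s - t0‖ ≤ t0 := by
        rw [Real.norm_eq_abs, abs_le]; constructor <;> linarith [hs.1, hs.2]
      have h8 : |φ s - φ t0| ≤ 1 / 4 * (p + q / √(M s)) := by
        calc |φ s - φ t0| ≤ lam * (C * t0) * (p + q / √(M s)) * ‖s - t0‖ := this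
          _ ≤ lam * (C * t0) * (p + q / √(M s)) * t0 := by gcongr
          _ = lam * C * t0 * t0 * (p + q / √(M s)) := by ring
          _ ≤ _ := by gcongr
      have h9 : |φ s| ≤ |φ t0| + |φ s - φ t0| := by
        have := abs_add_le (φ t0) (φ s - φ t0)
        simpa using this
      calc |φ s| ≤ c + 1 / 4 * (p + q / √(M s)) := by linarith
        _ = _ := by ring
    have hbase : ∀ t ∈ Ioc 0 t0, HasDerivAt (fun t => (c + p / 4) * M t + (q / 2) * √(M t))
        (h t * (c + p / 4 + q / 4 / √(M t))) t := by
      intro t ht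
      have hMt := hMpos t (hsub t ht)
      have h1 := (hM t (hsub t ht)).const_mul (c + p / 4)
      have h2 := ((hM t (hsub t ht)).sqrt hMt.ne').const_mul (q / 2)
      refine (h1.add h2).congr_deriv ?_
      ring
    have hlim : Tendsto (fun t => (c + p / 4) * M t + (q / 2) * √(M t)) (𝓝[>] 0) (𝓝 0) := by
      simpa using (hM0.const_mul (c + p / 4)).add (hS0.const_mul (q / 2))
    intro t ht
    rw [abs_le]
    constructor
    · have := nonneg_of _ _ (fun t ht => (hbase t ht).add (hF t (hsub t ht)))
        (fun t ht => by
          have h1 := (abs_le.1 (hφb t ht)).1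
          rw [← mul_add]
          exact mul_nonneg (W.pos t (hsub t ht)).le (by linarith))
        (by have h0 := hlim.add hF0; rw [add_zero] at h0; exact h0) t ht
      simp only [Pi.add_apply] at this
      linarith
    · have := nonneg_of _ _ (fun t ht => (hbase t ht).sub (hF t (hsub t ht)))
        (fun t ht => by
          have h1 := (abs_le.1 (hφb t ht)).2
          rw [← mul_sub]
          exact mul_nonneg (W.pos t (hsub t ht)).le (by linarith))
        (by have h0 := hlim.sub hF0; rw [sub_zero] at h0; exact h0) t ht
      simp only [Pi.sub_apply] at this
      linarith
  have hc0 : 0 ≤ c := abs_nonneg _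
  have iter : ∀ k : ℕ, ∀ t ∈ Ioc 0 t0, |F t| ≤ 2 * c * M t + A / 2 ^ k * √(M t) := by
    intro k
    induction k with
    | zero =>
      intro t ht
      have := hFA t (hsub t ht)
      have h1 := (hMpos t (hsub t ht)).le
      have : 0 ≤ 2 * c * M t := by positivity
      simp only [pow_zero, div_one]; linarith
    | succ k ih =>
      intro t ht
      have := step (2 * c) (A / 2 ^ k) (by positivity) (by positivity) ih t ht
      have h1 := (hMpos t (hsub t ht)).le
      have h2 : 0 ≤ c * M t := by positivity
      rw [pow_succ, ← div_div]
      linarith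
  have fin : ∀ t ∈ Ioc 0 t0, |F t| ≤ 2 * c * M t := by
    intro t ht
    have hl : Tendsto (fun k : ℕ => 2 * c * M t + A / 2 ^ k * √(M t)) atTop (𝓝 (2 * c * M t)) := by
      have h1 : Tendsto (fun k : ℕ => A / 2 ^ k) atTop (𝓝 0) :=
        tendsto_const_nhds.div_atTop (tendsto_pow_atTop_atTop_of_one_lt (by norm_num))
      simpa using (h1.mul_const (√(M t))).const_add (2 * c * M t)
    exact ge_of_tendsto' hl (fun k => iter k t ht)
  refine squeeze_zero_norm' (a := fun t => 2 * c * C * t) ?_ ?_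
  · filter_upwards [Ioc_mem_nhdsGT ht0] with t ht
    have hh := W.pos t (hsub t ht)
    rw [norm_div, Real.norm_of_nonneg hh.le, Real.norm_eq_abs, div_le_iff₀ hh]
    have := hMb t ht.1 (ht.2.trans ht0d)
    calc |F t| ≤ 2 * c * M t := fin t ht
      _ ≤ 2 * c * (C * t * h t) := by gcongr
      _ = _ := by ring
  · have : Continuous (fun t : ℝ => 2 * c * C * t) := by fun_prop
    simpa using (this.tendsto 0).mono_left nhdsWithin_le_nhds

/-! ### The dual form on `L²(0,d)` -/

/-- The unweighted Hilbert space `L²(0,d)`; the weight is carried by the factor `√h` in `prim`. -/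
noncomputable abbrev L2 (d : ℝ) := Lp ℝ 2 (volume.restrict (Ioo (0 : ℝ) d))

/-- The flux `F t = ∫₀ᵗ √h u`. For `u = √h f` it is the primitive of `h f`. -/
noncomputable def prim (h : ℝ → ℝ) (u : ℝ → ℝ) (t : ℝ) : ℝ := ∫ x in (0:ℝ)..t, √(h x) * u x

/-- The bilinear form `Q(u, v) = ∫ F_u F_v / h` on `(0,d)`, where `F_u = prim h u`. It is used only
for `u`, `v` with `F_u d = F_v d = 0`, where the integral converges. -/
noncomputable def dualForm (d : ℝ) (h : ℝ → ℝ) (u v : ℝ → ℝ) : ℝ :=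
  ∫ t in Ioo 0 d, prim h u t * prim h v t / h t

namespace Weight

variable {d C : ℝ} {h : ℝ → ℝ} (W : Weight d h C)
include W

lemma C_pos : 0 < C := by
  have hd := W.d_pos
  have h1 := W.left (d / 2) (d / 2) (by linarith) le_rfl le_rfl
  have h2 := W.pos (d / 2) ⟨by linarith, by linarith⟩
  by_contra hc
  nlinarith

lemma le_mid : ∀ x ∈ Ioo 0 d, h x ≤ C * h (d / 2) := by
  intro x hx
  rcases le_total x (d / 2) with hxd | hxd
  · exact W.left x (d / 2) hx.1 hxd le_rfl
  · exact W.right x (d / 2) le_rfl hxd hx.2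

lemma sqrt_cont : ContinuousOn (fun x => √(h x)) (Ioo 0 d) := W.cont.sqrt

lemma memLp_top_sqrt : MemLp (fun x => √(h x)) ⊤ (volume.restrict (Ioo 0 d)) := by
  refine memLp_top_of_bound (W.sqrt_cont.aestronglyMeasurable measurableSet_Ioo)
    (√(C * h (d / 2))) ?_
  refine (ae_restrict_iff' measurableSet_Ioo).2 (ae_of_all _ fun x hx => ?_)
  rw [Real.norm_of_nonneg (sqrt_nonneg _)]
  exact sqrt_le_sqrt (W.le_mid x hx)

lemma memLp_sqrt : MemLp (fun x => √(h x)) 2 (volume.restrict (Ioo 0 d)) :=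
  W.memLp_top_sqrt.mono_exponent le_top

lemma integrable_h : IntegrableOn h (Ioo 0 d) := by
  have := W.memLp_sqrt.integrable_sq
  refine this.congr ?_
  refine (ae_restrict_iff' measurableSet_Ioo).2 (ae_of_all _ fun x hx => ?_)
  exact sq_sqrt (W.pos x hx).le

lemma intervalIntegrable_of {g : ℝ → ℝ} (hg : IntegrableOn g (Ioo 0 d)) {s t : ℝ}
    (hs : s ∈ Icc 0 d) (ht : t ∈ Icc 0 d) : IntervalIntegrable g volume s t := by
  rw [← integrableOn_Icc_iff_integrableOn_Ioo, ← uIcc_of_le W.d_pos.le] at hg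
  refine (hg.intervalIntegrable).mono_set (uIcc_subset_uIcc ?_ ?_) <;>
    rwa [uIcc_of_le W.d_pos.le]

lemma integrable_sqrt_mul {u : ℝ → ℝ} (hu : MemLp u 2 (volume.restrict (Ioo 0 d))) :
    IntegrableOn (fun x => √(h x) * u x) (Ioo 0 d) :=
  W.memLp_sqrt.integrable_mul hu

lemma prim_continuousOn {u : ℝ → ℝ} (hu : MemLp u 2 (volume.restrict (Ioo 0 d))) :
    ContinuousOn (prim h u) (Icc 0 d) := by
  have := intervalIntegral.continuousOn_primitive_interval (a := 0) (b := d) (μ := volume)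
    (f := fun x => √(h x) * u x) (by
      rw [uIcc_of_le W.d_pos.le, integrableOn_Icc_iff_integrableOn_Ioo]
      exact W.integrable_sqrt_mul hu)
  rwa [uIcc_of_le W.d_pos.le] at this

/-- The class of `√h` on the interval `(s,t]`. -/
noncomputable def cut (s t : ℝ) : L2 d :=
  (W.memLp_sqrt.indicator (s := Ioc s t) measurableSet_Ioc).toLp

lemma inner_cut {s t : ℝ} (hs : 0 ≤ s) (hst : s ≤ t) (ht : t ≤ d) (u : L2 d) :
    ⟪W.cut s t, u⟫_ℝ = ∫ x in s..t, √(h x) * u x := by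
  rw [L2.inner_def, intervalIntegral.integral_of_le hst, integral_Ioc_eq_integral_Ioo]
  have h1 : ∀ᵐ x ∂(volume.restrict (Ioo 0 d)), ⟪(W.cut s t) x, u x⟫_ℝ =
      (Ioc s t).indicator (fun x => √(h x) * u x) x := by
    filter_upwards [(W.memLp_sqrt.indicator (s := Ioc s t) measurableSet_Ioc).coeFn_toLp] with x hx
    unfold cut
    rw [hx]
    by_cases hxs : x ∈ Ioc s t <;> simp [hxs, mul_comm]
  rw [integral_congr_ae h1, integral_indicator measurableSet_Ioc,
    Measure.restrict_restrict measurableSet_Ioc, ← integral_Ioc_eq_integral_Ioo]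
  refine setIntegral_congr_set ?_
  have : (Ioc s t ∩ Ioo 0 d : Set ℝ) =ᵐ[volume] (Ioc s t ∩ Ioc 0 d : Set ℝ) :=
    (ae_eq_refl _).inter Ioo_ae_eq_Ioc
  refine this.trans ?_
  rw [inter_eq_left.2 (Ioc_subset_Ioc hs ht)]
  exact EventuallyEq.rfl

lemma norm_cut_sq {s t : ℝ} (hs : 0 ≤ s) (hst : s ≤ t) (ht : t ≤ d) :
    ‖W.cut s t‖ ^ 2 = ∫ x in s..t, h x := by
  rw [← real_inner_self_eq_norm_sq, W.inner_cut hs hst ht]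
  have h1 := (ae_restrict_iff' measurableSet_Ioo).1
    (W.memLp_sqrt.indicator (s := Ioc s t) measurableSet_Ioc).coeFn_toLp
  have h2 : ∀ᵐ x : ℝ, x ≠ d := by
    simp [ae_iff, measure_singleton]
  refine intervalIntegral.integral_congr_ae ?_
  filter_upwards [h1, h2] with x hx hxd hxst
  rw [uIoc_of_le hst] at hxst
  have hx' : x ∈ Ioo 0 d := ⟨by linarith [hxst.1], lt_of_le_of_ne (by linarith [hxst.2]) hxd⟩
  unfold cut
  rw [hx hx', indicator_of_mem hxst, mul_self_sqrt (W.pos x hx').le]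

lemma cauchy_schwarz {s t : ℝ} (hs : 0 ≤ s) (hst : s ≤ t) (ht : t ≤ d) (u : L2 d) :
    (∫ x in s..t, √(h x) * u x) ^ 2 ≤ (∫ x in s..t, h x) * ‖u‖ ^ 2 := by
  rw [← W.inner_cut hs hst ht, ← W.norm_cut_sq hs hst ht, ← mul_pow]
  exact sq_le_sq' (by linarith [neg_le_of_abs_le (abs_real_inner_le_norm (W.cut s t) u)])
    (real_inner_le_norm _ _)

lemma mass_left {t : ℝ} (ht0 : 0 < t) (ht : t ≤ d / 2) : ∫ x in (0:ℝ)..t, h x ≤ C * t * h t := by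
  have hd := W.d_pos
  have : ∫ x in (0:ℝ)..t, h x ≤ ∫ x in (0:ℝ)..t, C * h t := by
    refine intervalIntegral.integral_mono_on_of_le_Ioo ht0.le
      (W.intervalIntegrable_of W.integrable_h ⟨le_rfl, hd.le⟩ ⟨ht0.le, by linarith⟩) (by simp) ?_
    intro x hx
    exact W.left x t hx.1 hx.2.le ht
  refine this.trans (le_of_eq ?_)
  simp; ring

lemma mass_right {t : ℝ} (ht0 : d / 2 ≤ t) (ht : t < d) :
    ∫ x in t..d, h x ≤ C * (d - t) * h t := by
  have hd := W.d_pos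
  have : ∫ x in t..d, h x ≤ ∫ x in t..d, C * h t := by
    refine intervalIntegral.integral_mono_on_of_le_Ioo ht.le
      (W.intervalIntegrable_of W.integrable_h ⟨by linarith, ht.le⟩ ⟨hd.le, le_rfl⟩) (by simp) ?_
    intro x hx
    exact W.right x t ht0 hx.1.le hx.2
  refine this.trans (le_of_eq ?_)
  simp; ring

/-- For `F d = 0`, the flux can be computed from the right endpoint. -/
lemma prim_add_right {u : L2 d} (hu : prim h u d = 0) {t : ℝ} (ht : t ∈ Icc 0 d) :
    prim h u t = -∫ x in t..d, √(h x) * u x := by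
  have hi := W.integrable_sqrt_mul (Lp.memLp u)
  have := intervalIntegral.integral_add_adjacent_intervals
    (W.intervalIntegrable_of hi ⟨le_rfl, W.d_pos.le⟩ ht)
    (W.intervalIntegrable_of hi ht ⟨W.d_pos.le, le_rfl⟩)
  unfold prim at hu ⊢
  linarith

/-- Cauchy–Schwarz from the nearer endpoint: `F² ≤ M ‖u‖²` with the mass `M` at most `C d h`. -/
lemma prim_sq_le {u : L2 d} (hu : prim h u d = 0) {t : ℝ} (ht : t ∈ Ioo 0 d) :
    prim h u t ^ 2 ≤ C * d * h t * ‖u‖ ^ 2 := by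
  have hC := W.C_pos
  have hh := W.pos t ht
  have h1 := ht.1
  have h2 := ht.2
  rcases le_total t (d / 2) with h3 | h3
  · refine (W.cauchy_schwarz le_rfl h1.le h2.le u).trans ?_
    gcongr
    refine (W.mass_left h1 h3).trans ?_
    gcongr
  · rw [W.prim_add_right hu ⟨h1.le, h2.le⟩, neg_sq]
    refine (W.cauchy_schwarz h1.le h2.le le_rfl u).trans ?_
    gcongr
    refine (W.mass_right h3 h2).trans ?_
    gcongr
    linarith

lemma quot_bound {u v : L2 d} (hu : prim h u d = 0) (hv : prim h v d = 0) {t : ℝ}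
    (ht : t ∈ Ioo 0 d) : ‖prim h u t * prim h v t / h t‖ ≤ C * d * (‖u‖ ^ 2 + ‖v‖ ^ 2) := by
  have hh := W.pos t ht
  have h1 := W.prim_sq_le hu ht
  have h2 := W.prim_sq_le hv ht
  rw [norm_div, Real.norm_of_nonneg hh.le, div_le_iff₀ hh, Real.norm_eq_abs, abs_le]
  constructor <;> nlinarith [sq_nonneg (prim h u t + prim h v t), sq_nonneg (prim h u t - prim h v t)]

lemma quot_meas (u v : L2 d) : AEStronglyMeasurable (fun t => prim h u t * prim h v t / h t)
    (volume.restrict (Ioo 0 d)) := by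
  refine ContinuousOn.aestronglyMeasurable ?_ measurableSet_Ioo
  exact ((((W.prim_continuousOn (Lp.memLp u)).mono Ioo_subset_Icc_self).mul
    ((W.prim_continuousOn (Lp.memLp v)).mono Ioo_subset_Icc_self)).div W.cont
    (fun x hx => (W.pos x hx).ne'))

lemma quot_integrable {u v : L2 d} (hu : prim h u d = 0) (hv : prim h v d = 0) :
    IntegrableOn (fun t => prim h u t * prim h v t / h t) (Ioo 0 d) :=
  Integrable.of_bound (W.quot_meas u v) (C * d * (‖u‖ ^ 2 + ‖v‖ ^ 2))
    ((ae_restrict_iff' measurableSet_Ioo).2 (ae_of_all _ fun _ ht => W.quot_bound hu hv ht))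

lemma prim_eq_inner {t : ℝ} (ht : t ∈ Icc 0 d) (u : L2 d) : prim h u t = ⟪W.cut 0 t, u⟫_ℝ :=
  (W.inner_cut le_rfl ht.1 ht.2 u).symm

lemma dualForm_add_smul {u v : L2 d} (hu : prim h u d = 0) (hv : prim h v d = 0) (s : ℝ) :
    dualForm d h (u + s • v : L2 d) (u + s • v : L2 d) =
      dualForm d h u u + 2 * s * dualForm d h u v + s ^ 2 * dualForm d h v v := by
  unfold dualForm
  rw [← integral_const_mul, ← integral_const_mul, ← integral_add (W.quot_integrable hu hu)
    ((W.quot_integrable hu hv).const_mul _), ← integral_add]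
  · refine setIntegral_congr_fun measurableSet_Ioo fun t ht => ?_
    have ht' : t ∈ Icc 0 d := ⟨ht.1.le, ht.2.le⟩
    simp only [W.prim_eq_inner ht', inner_add_right, inner_smul_right]
    ring
  · exact (W.quot_integrable hu hu).add ((W.quot_integrable hu hv).const_mul _)
  · exact (W.quot_integrable hv hv).const_mul _

/-- The form `Q` attains its maximum over the unit ball of `{F d = 0}`. The ball is weakly sequentially
compact (Banach–Alaoglu in the separable space `L²`), weak convergence gives pointwise convergence
of `F`, and `F² / h` is uniformly bounded. -/
lemma exists_maximizer : ∃ u : L2 d, ∃ κ : ℝ, ‖u‖ ≤ 1 ∧ prim h u d = 0 ∧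
    dualForm d h u u = κ ∧ ∀ v : L2 d, prim h v d = 0 → dualForm d h v v ≤ κ * ‖v‖ ^ 2 := by
  have hd := W.d_pos
  have hC := W.C_pos
  have hdd : d ∈ Icc 0 d := ⟨hd.le, le_rfl⟩
  set S : Set (L2 d) := {u | ‖u‖ ≤ 1 ∧ prim h u d = 0} with hS
  set Q : L2 d → ℝ := fun u => dualForm d h u u with hQ
  have hbdd : BddAbove (Q '' S) := by
    refine ⟨C * d * (1 + 1) * d, ?_⟩
    rintro _ ⟨u, ⟨hu1, hu2⟩, rfl⟩
    have : ‖Q u‖ ≤ C * d * (1 + 1) * (volume.real (Ioo 0 d)) := by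
      refine norm_setIntegral_le_of_norm_le_const (by simp) fun t ht => ?_
      refine (W.quot_bound hu2 hu2 ht).trans ?_
      have : ‖u‖ ^ 2 ≤ 1 := pow_le_one₀ (norm_nonneg _) hu1
      gcongr
    rw [Measure.real, Real.volume_Ioo, ENNReal.toReal_ofReal (by linarith), sub_zero] at this
    exact (le_abs_self _).trans this
  have hne : (Q '' S).Nonempty := by
    refine ⟨_, 0, ⟨by simp, ?_⟩, rfl⟩
    rw [W.prim_eq_inner hdd, inner_zero_right]
  obtain ⟨y, -, hy, hyS⟩ := exists_seq_tendsto_sSup hne hbdd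
  choose w hwS hwy using hyS
  set κ := sSup (Q '' S) with hκ
  have hseq : ∀ n, (InnerProductSpace.toDual ℝ (L2 d) (w n)).toWeakDual ∈
      WeakDual.toStrongDual ⁻¹' Metric.closedBall (0 : StrongDual ℝ (L2 d)) 1 := by
    intro n
    simp [(hwS n).1]
  have : Fact ((2 : ENNReal) ≠ ⊤) := ⟨by simp⟩
  obtain ⟨z, hz, ψ, hψ, hlim⟩ := WeakDual.isSeqCompact_closedBall ℝ (L2 d) 0 1 hseq
  set u : L2 d := (InnerProductSpace.toDual ℝ (L2 d)).symm z.toStrongDual with hu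
  have hu1 : ‖u‖ ≤ 1 := by
    rw [hu, LinearIsometryEquiv.norm_map]
    simpa using hz
  have hweak : ∀ e : L2 d, Tendsto (fun n => ⟪e, w (ψ n)⟫_ℝ) atTop (𝓝 ⟪e, u⟫_ℝ) := by
    intro e
    have h1 := ((WeakDual.eval_continuous e).tendsto z).comp hlim
    have h2 : z e = ⟪e, u⟫_ℝ := by
      rw [real_inner_comm, hu, InnerProductSpace.toDual_symm_apply]; rfl
    rw [h2] at h1
    refine h1.congr fun n => ?_
    rw [real_inner_comm]; rfl
  have hprim : ∀ t ∈ Icc 0 d, Tendsto (fun n => prim h (w (ψ n)) t) atTop (𝓝 (prim h u t)) := by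
    intro t ht
    simp only [W.prim_eq_inner ht]
    exact hweak _
  have hud : prim h u d = 0 := by
    refine tendsto_nhds_unique (hprim d hdd) ?_
    exact tendsto_const_nhds.congr fun n => (hwS (ψ n)).2.symm
  have hQlim : Tendsto (fun n => Q (w (ψ n))) atTop (𝓝 (Q u)) := by
    refine tendsto_integral_of_dominated_convergence (fun _ => C * d * (1 + 1))
      (fun n => W.quot_meas _ _) (integrable_const _) (fun n => ?_) ?_
    · refine (ae_restrict_iff' measurableSet_Ioo).2 (ae_of_all _ fun t ht => ?_)
      refine (W.quot_bound (hwS _).2 (hwS _).2 ht).trans ?_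
      have : ‖w (ψ n)‖ ^ 2 ≤ 1 := pow_le_one₀ (norm_nonneg _) (hwS _).1
      gcongr
    · refine (ae_restrict_iff' measurableSet_Ioo).2 (ae_of_all _ fun t ht => ?_)
      have := hprim t ⟨ht.1.le, ht.2.le⟩
      exact (this.mul this).div_const _
  have hQu : Q u = κ := by
    refine tendsto_nhds_unique hQlim ?_
    have : (fun n => Q (w (ψ n))) = y ∘ ψ := by
      ext n; exact hwy (ψ n)
    rw [this]
    exact hy.comp hψ.tendsto_atTop
  refine ⟨u, κ, hu1, hud, hQu, fun v hv => ?_⟩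
  rcases eq_or_ne v 0 with rfl | hv0
  · have : dualForm d h (0 : L2 d) (0 : L2 d) = 0 := by
      unfold dualForm
      refine setIntegral_eq_zero_of_forall_eq_zero fun t ht => ?_
      rw [W.prim_eq_inner ⟨ht.1.le, ht.2.le⟩, inner_zero_right]; simp
    rw [this]; simp
  · have hn : 0 < ‖v‖ := norm_pos_iff.2 hv0
    have hmem : (‖v‖⁻¹ • v : L2 d) ∈ S := by
      refine ⟨?_, ?_⟩
      · rw [norm_smul, norm_inv, norm_norm, inv_mul_cancel₀ hn.ne']
      · rw [W.prim_eq_inner hdd, inner_smul_right, ← W.prim_eq_inner hdd, hv, mul_zero]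
    have h1 : Q (‖v‖⁻¹ • v) ≤ κ := le_csSup hbdd ⟨_, hmem, rfl⟩
    have h2 : Q (‖v‖⁻¹ • v) = ‖v‖⁻¹ ^ 2 * dualForm d h v v := by
      simp only [hQ, dualForm]
      rw [← integral_const_mul]
      refine setIntegral_congr_fun measurableSet_Ioo fun t ht => ?_
      have ht' : t ∈ Icc 0 d := ⟨ht.1.le, ht.2.le⟩
      simp only [W.prim_eq_inner ht', inner_smul_right]
      ring
    rw [h2, inv_pow, inv_mul_le_iff₀ (by positivity)] at h1
    linarith

/-- Stationarity at a maximizer, from perturbing `u` to `u + s v`. -/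
lemma euler_lagrange_dual {u : L2 d} {κ : ℝ} (hu : prim h u d = 0)
    (hmax : dualForm d h u u = κ * ‖u‖ ^ 2)
    (hle : ∀ v : L2 d, prim h v d = 0 → dualForm d h v v ≤ κ * ‖v‖ ^ 2)
    {v : L2 d} (hv : prim h v d = 0) : dualForm d h u v = κ * ⟪u, v⟫_ℝ := by
  have hdd : d ∈ Icc 0 d := ⟨W.d_pos.le, le_rfl⟩
  set x := dualForm d h u v - κ * ⟪u, v⟫_ℝ with hx
  set y := κ * ‖v‖ ^ 2 - dualForm d h v v with hy
  have hy0 : 0 ≤ y := sub_nonneg.2 (hle v hv)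
  have key : ∀ s : ℝ, 2 * s * x ≤ s ^ 2 * y := by
    intro s
    have h1 : prim h (u + s • v : L2 d) d = 0 := by
      rw [W.prim_eq_inner hdd, inner_add_right, inner_smul_right, ← W.prim_eq_inner hdd,
        ← W.prim_eq_inner hdd, hu, hv]; ring
    have h2 := hle _ h1
    rw [W.dualForm_add_smul hu hv, hmax, norm_add_sq_real, inner_smul_right, norm_smul, mul_pow,
      Real.norm_eq_abs, sq_abs] at h2
    rw [hx, hy]
    linarith
  -- a step small enough for the linear term to dominate, also when `y = 0`
  have h3 := key (x / (y + 1))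
  have hx0 : x = 0 := by
    have e1 : 2 * (x / (y + 1)) * x = 2 * x ^ 2 / (y + 1) := by ring
    have e2 : (x / (y + 1)) ^ 2 * y = x ^ 2 * y / (y + 1) ^ 2 := by rw [div_pow]; ring
    rw [e1, e2, div_le_div_iff₀ (by positivity) (by positivity)] at h3
    by_contra hne
    have : 0 < x ^ 2 := by positivity
    have h4 : 0 < x ^ 2 * (y + 1) * (y + 2) := by positivity
    nlinarith
  linarith

end Weight

/-! ### The Poincaré inequality -/

namespace Weight

variable {d C : ℝ} {h : ℝ → ℝ} (W : Weight d h C)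
include W

lemma prim_toLp {v : ℝ → ℝ} (hv : MemLp v 2 (volume.restrict (Ioo 0 d))) {t : ℝ}
    (ht : t ∈ Icc 0 d) : prim h (hv.toLp v) t = prim h v t := by
  unfold prim
  have h1 := (ae_restrict_iff' measurableSet_Ioo).1 hv.coeFn_toLp
  have h2 : ∀ᵐ x : ℝ, x ≠ d := by
    simp [ae_iff, measure_singleton]
  refine intervalIntegral.integral_congr_ae ?_
  filter_upwards [h1, h2] with x hx hxd hxt
  rw [uIoc_of_le ht.1] at hxt
  rw [hx ⟨hxt.1, lt_of_le_of_ne (hxt.2.trans ht.2) hxd⟩]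

lemma integral_eq_Ioo (g : ℝ → ℝ) : ∫ x in (0:ℝ)..d, g x = ∫ x in Ioo 0 d, g x := by
  rw [intervalIntegral.integral_of_le W.d_pos.le, integral_Ioc_eq_integral_Ioo]

lemma inner_toLp {v : ℝ → ℝ} (hv : MemLp v 2 (volume.restrict (Ioo 0 d))) (u : L2 d) :
    ⟪u, hv.toLp v⟫_ℝ = ∫ x in Ioo 0 d, u x * v x := by
  rw [L2.inner_def]
  refine integral_congr_ae ?_
  filter_upwards [hv.coeFn_toLp] with x hx
  rw [hx, real_inner_eq_re_inner]
  simp [mul_comm]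

lemma bounded_of_cont {f : ℝ → ℝ} (hf : Continuous f) :
    ∃ M, ∀ x ∈ Ioo 0 d, ‖f x‖ ≤ M := by
  obtain ⟨M, hM⟩ := isCompact_Icc.exists_bound_of_continuousOn (s := Icc 0 d) hf.continuousOn
  exact ⟨M, fun x hx => hM x (Ioo_subset_Icc_self hx)⟩

lemma integrable_h_mul {f : ℝ → ℝ} (hf : Continuous f) :
    IntegrableOn (fun x => h x * f x) (Ioo 0 d) := by
  obtain ⟨M, hM⟩ := W.bounded_of_cont hf
  exact W.integrable_h.mul_bdd hf.aestronglyMeasurable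
    ((ae_restrict_iff' measurableSet_Ioo).2 (ae_of_all _ hM))

lemma memLp_sqrt_mul {f : ℝ → ℝ} (hf : Continuous f) :
    MemLp (fun x => √(h x) * f x) 2 (volume.restrict (Ioo 0 d)) := by
  obtain ⟨M, hM⟩ := W.bounded_of_cont hf
  refine W.memLp_sqrt.of_le_mul (c := M)
    (W.memLp_sqrt.aestronglyMeasurable.mul hf.aestronglyMeasurable) ?_
  refine (ae_restrict_iff' measurableSet_Ioo).2 (ae_of_all _ fun x hx => ?_)
  rw [norm_mul, mul_comm]
  gcongr
  exact hM x hx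

lemma primitive_cont {g : ℝ → ℝ} (hg : IntegrableOn g (Ioo 0 d)) :
    ContinuousOn (fun t => ∫ x in (0:ℝ)..t, g x) (Icc 0 d) := by
  have := intervalIntegral.continuousOn_primitive_interval (a := 0) (b := d) (μ := volume)
    (f := g) (by rwa [uIcc_of_le W.d_pos.le, integrableOn_Icc_iff_integrableOn_Ioo])
  rwa [uIcc_of_le W.d_pos.le] at this

lemma primitive_deriv {g : ℝ → ℝ} (hg : IntegrableOn g (Ioo 0 d)) (hgc : ContinuousOn g (Ioo 0 d))
    {a t : ℝ} (ha : a ∈ Icc 0 d) (ht : t ∈ Ioo 0 d) :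
    HasDerivAt (fun t => ∫ x in a..t, g x) (g t) t := by
  refine intervalIntegral.integral_hasDerivAt_right
    (W.intervalIntegrable_of hg ha (Ioo_subset_Icc_self ht))
    (hgc.stronglyMeasurableAtFilter isOpen_Ioo t ht) (hgc.continuousAt (isOpen_Ioo.mem_nhds ht))

/-- For `u = √h f`, the flux is the primitive of `h f`. -/
lemma sqrt_mul_cancel {t : ℝ} (ht : t ∈ Icc 0 d) (f : ℝ → ℝ) :
    prim h (fun x => √(h x) * f x) t = ∫ x in (0:ℝ)..t, h x * f x := by
  unfold prim
  rw [intervalIntegral.integral_of_le ht.1, intervalIntegral.integral_of_le ht.1,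
    integral_Ioc_eq_integral_Ioo, integral_Ioc_eq_integral_Ioo]
  refine setIntegral_congr_fun measurableSet_Ioo fun x hx => ?_
  simp only
  rw [← mul_assoc, mul_self_sqrt (W.pos x ⟨hx.1, hx.2.trans_le ht.2⟩).le]

/-- A bound `κ` for the dual form is a Poincaré constant: with `G = ∫₀ᵗ h f`,
`∫ h f² = -∫ f' G ≤ (κ/2) ∫ h f'² + (1/(2κ)) ∫ G² / h`, and the last integral is at most
`κ ∫ h f²`. -/
lemma poincare {κ : ℝ} (hκ : 0 < κ)
    (hle : ∀ v : L2 d, prim h v d = 0 → dualForm d h v v ≤ κ * ‖v‖ ^ 2)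
    {f : ℝ → ℝ} (hf : ContDiff ℝ 1 f) (h0 : ∫ x in (0:ℝ)..d, h x * f x = 0) :
    ∫ x in (0:ℝ)..d, h x * f x ^ 2 ≤ κ * ∫ x in (0:ℝ)..d, h x * deriv f x ^ 2 := by
  have hd := W.d_pos
  have hdd : d ∈ Icc 0 d := ⟨hd.le, le_rfl⟩
  have hfc := hf.continuous
  have hf'c : Continuous (deriv f) := hf.continuous_deriv le_rfl
  set v : L2 d := (W.memLp_sqrt_mul hfc).toLp with hv
  have hG : ∀ t ∈ Icc 0 d, prim h v t = ∫ x in (0:ℝ)..t, h x * f x := fun t ht => by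
    rw [hv, W.prim_toLp _ ht, W.sqrt_mul_cancel ht]
  set G : ℝ → ℝ := fun t => ∫ x in (0:ℝ)..t, h x * f x with hGdef
  have hint := W.integrable_h_mul hfc
  have hGc : ContinuousOn G (Icc 0 d) := W.primitive_cont hint
  have hvd : prim h v d = 0 := by rw [hG d hdd]; exact h0
  have hnorm : ‖v‖ ^ 2 = ∫ x in Ioo 0 d, h x * f x ^ 2 := by
    rw [← real_inner_self_eq_norm_sq]
    conv_lhs => rw [hv, W.inner_toLp]
    refine integral_congr_ae ?_
    filter_upwards [(W.memLp_sqrt_mul hfc).coeFn_toLp, ae_restrict_mem measurableSet_Ioo] with x hx hxm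
    rw [hx]
    linear_combination f x ^ 2 * mul_self_sqrt (W.pos x hxm).le
  have hibp : ∫ x in (0:ℝ)..d, f x * (h x * f x) = - ∫ x in (0:ℝ)..d, deriv f x * G x := by
    rw [intervalIntegral.integral_mul_deriv_eq_deriv_mul_of_hasDerivAt (v := G) (u' := deriv f)
      hfc.continuousOn (by rwa [uIcc_of_le hd.le])]
    · have e1 : G d = 0 := h0
      have e2 : G 0 = 0 := by simp [hGdef]
      rw [e1, e2]; ring
    · intro x _
      exact (hf.differentiable one_ne_zero x).hasDerivAt
    · intro x hx
      rw [min_eq_left hd.le, max_eq_right hd.le] at hx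
      exact W.primitive_deriv hint (W.cont.mul hfc.continuousOn) ⟨le_rfl, hd.le⟩ hx
    · exact hf'c.intervalIntegrable _ _
    · exact W.intervalIntegrable_of hint ⟨le_rfl, hd.le⟩ hdd
  have hQ : dualForm d h v v = ∫ t in Ioo 0 d, G t * G t / h t := by
    refine setIntegral_congr_fun measurableSet_Ioo fun t ht => ?_
    simp only [hG t (Ioo_subset_Icc_self ht), hGdef]
  have hQint : IntegrableOn (fun t => G t * G t / h t) (Ioo 0 d) := by
    refine (W.quot_integrable hvd hvd).congr_fun (fun t ht => ?_) measurableSet_Ioo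
    simp only [hG t (Ioo_subset_Icc_self ht), hGdef]
  have h1 : (∫ t in Ioo 0 d, -(deriv f t * G t)) ≤
      ∫ t in Ioo 0 d, (κ / 2 * (h t * deriv f t ^ 2) + (1 / (2 * κ)) * (G t * G t / h t)) := by
    refine setIntegral_mono_on ?_ ?_ measurableSet_Ioo ?_
    · exact (((hf'c.continuousOn.mul hGc).integrableOn_Icc).mono_set Ioo_subset_Icc_self).neg
    · exact ((W.integrable_h_mul (f := fun t => deriv f t ^ 2) (hf'c.pow 2)).const_mul _).add (hQint.const_mul _)
    · intro t ht
      have hp := W.pos t ht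
      have : κ / 2 * (h t * deriv f t ^ 2) + (1 / (2 * κ)) * (G t * G t / h t)
          + deriv f t * G t = (κ * h t * deriv f t + G t) ^ 2 / (2 * κ * h t) := by
        field_simp
        ring
      have h2 : 0 ≤ (κ * h t * deriv f t + G t) ^ 2 / (2 * κ * h t) := by positivity
      linarith
  rw [integral_add ((W.integrable_h_mul (f := fun t => deriv f t ^ 2) (hf'c.pow 2)).const_mul _) (hQint.const_mul _),
    integral_const_mul, integral_const_mul, ← hQ, integral_neg] at h1
  have h2 := hle v hvd
  rw [W.integral_eq_Ioo, W.integral_eq_Ioo] at hibp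
  have h3 : ∫ x in Ioo 0 d, f x * (h x * f x) = ∫ x in Ioo 0 d, h x * f x ^ 2 := by
    congr 1; ext x; ring
  rw [W.integral_eq_Ioo, W.integral_eq_Ioo, ← hnorm]
  rw [h3, ← hnorm] at hibp
  have h4 : 1 / (2 * κ) * dualForm d h v v ≤ 1 / (2 * κ) * (κ * ‖v‖ ^ 2) := by gcongr
  have h5 : 1 / (2 * κ) * (κ * ‖v‖ ^ 2) = ‖v‖ ^ 2 / 2 := by field_simp
  linarith

lemma mass_pos : 0 < ∫ x in Ioo 0 d, h x := by
  rw [← W.integral_eq_Ioo]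
  exact intervalIntegral.intervalIntegral_pos_of_pos_on
    (W.intervalIntegrable_of W.integrable_h ⟨le_rfl, W.d_pos.le⟩ ⟨W.d_pos.le, le_rfl⟩)
    W.pos W.d_pos

/-- The maximum is positive: otherwise the Poincaré inequality would hold with every positive
constant, and a centred affine function violates this. -/
lemma kappa_pos {κ : ℝ}
    (hle : ∀ v : L2 d, prim h v d = 0 → dualForm d h v v ≤ κ * ‖v‖ ^ 2) : 0 < κ := by
  by_contra hκ
  push Not at hκ
  have hd := W.d_pos
  have hm := W.mass_pos
  set c := (∫ x in Ioo 0 d, h x * x) / ∫ x in Ioo 0 d, h x with hc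
  set f : ℝ → ℝ := fun x => x - c with hf
  have hfC : ContDiff ℝ 1 f := by fun_prop
  have hf' : deriv f = fun _ => 1 := by
    ext x; simp [hf]
  have h0 : ∫ x in (0:ℝ)..d, h x * f x = 0 := by
    rw [W.integral_eq_Ioo]
    have : ∫ x in Ioo 0 d, h x * f x = (∫ x in Ioo 0 d, h x * x) - ∫ x in Ioo 0 d, h x * c := by
      rw [← integral_sub (W.integrable_h_mul (f := fun x => x) continuous_id)
        (W.integrable_h_mul continuous_const)]
      congr 1; ext x; simp [hf]; ring
    rw [this, integral_mul_const, hc]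
    field_simp
    ring
  have hpos : 0 < ∫ x in (0:ℝ)..d, h x * f x ^ 2 := by
    rw [W.integral_eq_Ioo, integral_pos_iff_support_of_nonneg_ae]
    · have : Ioo 0 d \ {c} ⊆ Function.support (fun x => h x * f x ^ 2) := by
        intro x hx
        have h1 : f x ≠ 0 := sub_ne_zero.2 hx.2
        exact mul_ne_zero (W.pos x hx.1).ne' (pow_ne_zero _ h1)
      refine lt_of_lt_of_le ?_ (measure_mono this)
      rw [Measure.restrict_apply (measurableSet_Ioo.diff (measurableSet_singleton _)),
        inter_eq_left.2 sdiff_subset, measure_sdiff_null (by simp)]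
      simpa using hd
    · refine (ae_restrict_iff' measurableSet_Ioo).2 (ae_of_all _ fun x hx => ?_)
      have := W.pos x hx
      simp only [Pi.zero_apply]
      positivity
    · exact W.integrable_h_mul (f := fun x => f x ^ 2) (hfC.continuous.pow 2)
  set P := ∫ x in (0:ℝ)..d, h x * f x ^ 2 with hP
  have key : ∀ ε > 0, P ≤ ε * ∫ x in Ioo 0 d, h x := by
    intro ε hε
    have := W.poincare hε (fun v hv => (hle v hv).trans (by
      have := sq_nonneg ‖v‖
      nlinarith)) hfC h0
    rw [hf'] at this
    simpa [hP, W.integral_eq_Ioo] using this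
  have := key (P / (2 * ∫ x in Ioo 0 d, h x)) (by positivity)
  have e : P / (2 * ∫ x in Ioo 0 d, h x) * (∫ x in Ioo 0 d, h x) = P / 2 := by
    field_simp
  linarith

end Weight

/-! ### Regularity of the maximizer -/

/-- The primitive of `F / h`, where `F = prim h u`, that vanishes at the midpoint. -/
noncomputable def pot (d : ℝ) (h u : ℝ → ℝ) (t : ℝ) : ℝ := ∫ x in (d / 2)..t, prim h u x / h x

lemma exists_Icc_of_compact {d : ℝ} (hd : 0 < d) {K : Set ℝ} (hK : IsCompact K)
    (hKd : K ⊆ Ioo 0 d) : ∃ α β, 0 < α ∧ α < β ∧ β < d ∧ K ⊆ Icc α β := by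
  rcases K.eq_empty_or_nonempty with rfl | hne
  · exact ⟨d / 3, d / 2, by linarith, by linarith, by linarith, empty_subset _⟩
  · have h1 := hKd (hK.sInf_mem hne)
    have h2 := hKd (hK.sSup_mem hne)
    refine ⟨min (sInf K) (d / 3), max (sSup K) (d / 2), lt_min h1.1 (by linarith), ?_,
      max_lt h2.2 (by linarith), fun x hx => ⟨?_, ?_⟩⟩
    · exact (min_le_right _ _).trans_lt (lt_of_lt_of_le (by linarith) (le_max_right _ _))
    · exact (min_le_left _ _).trans (csInf_le hK.bddBelow hx)
    · exact (le_csSup hK.bddAbove hx).trans (le_max_left _ _)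

lemma integrable_cutoff {d α β : ℝ} (hα : 0 < α) (hβ : β < d) {w η : ℝ → ℝ}
    (hw : LocallyIntegrableOn w (Ioo 0 d)) (hη : Continuous η) (h0 : ∀ x ∉ Icc α β, η x = 0) :
    IntegrableOn (fun x => η x * w x) (Ioo 0 d) := by
  have hsub : Icc α β ⊆ Ioo 0 d := fun x hx => ⟨hα.trans_le hx.1, hx.2.trans_lt hβ⟩
  refine IntegrableOn.of_forall_sdiff_eq_zero (s := Icc α β) ?_ measurableSet_Ioo ?_
  · exact (hw.integrableOn_compact_subset hsub isCompact_Icc).continuousOn_mul hη.continuousOn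
      isCompact_Icc
  · intro x hx
    simp only [h0 x hx.2, zero_mul]

namespace Weight

variable {d C : ℝ} {h : ℝ → ℝ} (W : Weight d h C)
include W

lemma quot_cont (u : L2 d) : ContinuousOn (fun x => prim h u x / h x) (Ioo 0 d) :=
  ((W.prim_continuousOn (Lp.memLp u)).mono Ioo_subset_Icc_self).div W.cont
    (fun x hx => (W.pos x hx).ne')

lemma pot_deriv (u : L2 d) {t : ℝ} (ht : t ∈ Ioo 0 d) :
    HasDerivAt (pot d h u) (prim h u t / h t) t := by
  have hd := W.d_pos
  have hc := W.quot_cont u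
  have hsub : uIcc (d / 2) t ⊆ Ioo 0 d := fun x hx =>
    ⟨(lt_min (by linarith) ht.1).trans_le hx.1, hx.2.trans_lt (max_lt (by linarith) ht.2)⟩
  exact intervalIntegral.integral_hasDerivAt_right ((hc.mono hsub).intervalIntegrable)
    (hc.stronglyMeasurableAtFilter isOpen_Ioo t ht) (hc.continuousAt (isOpen_Ioo.mem_nhds ht))

lemma pot_cont (u : L2 d) : ContinuousOn (pot d h u) (Ioo 0 d) := fun _ ht =>
  (W.pot_deriv u ht).continuousAt.continuousWithinAt

lemma locInt_quot (u : L2 d) : LocallyIntegrableOn (fun x => u x / √(h x)) (Ioo 0 d) := by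
  have h1 : LocallyIntegrableOn u (Ioo 0 d) :=
    IntegrableOn.locallyIntegrableOn ((Lp.memLp u).integrable (by norm_num))
  have := h1.continuousOn_mul (g := fun x => (√(h x))⁻¹)
    (W.sqrt_cont.inv₀ fun x hx => (sqrt_pos.2 (W.pos x hx)).ne') isOpen_Ioo.isLocallyClosed
  simpa only [div_eq_inv_mul] using this

/-- The stationarity condition tested with `v = η / √h`, where `η` has mean zero and is supported away
from the endpoints; integrating by parts moves the derivative off `pot`. -/
lemma test_eta {u : L2 d} {κ : ℝ}
    (hEL : ∀ v : L2 d, prim h v d = 0 → dualForm d h u v = κ * ⟪u, v⟫_ℝ)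
    {α β : ℝ} (hα : 0 < α) (hαβ : α < β) (hβ : β < d) {η : ℝ → ℝ}
    (hη : Continuous η) (h0 : ∀ x ∉ Icc α β, η x = 0) (hint : ∫ x in Ioo 0 d, η x = 0) :
    ∫ x in Ioo 0 d, η x * (κ * (u x / √(h x)) + pot d h u x) = 0 := by
  have hd := W.d_pos
  have hdd : d ∈ Icc 0 d := ⟨hd.le, le_rfl⟩
  have hsub : Icc α β ⊆ Ioo 0 d := fun x hx => ⟨hα.trans_le hx.1, hx.2.trans_lt hβ⟩
  set G : ℝ → ℝ := fun t => ∫ x in (0:ℝ)..t, η x with hG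
  have hGder : ∀ t, HasDerivAt G (η t) t := fun t => by
    exact intervalIntegral.integral_hasDerivAt_right (hη.intervalIntegrable _ _)
      (hη.stronglyMeasurableAtFilter _ _) hη.continuousAt
  have hGd : G d = 0 := by rw [hG]; simp only; rw [W.integral_eq_Ioo, hint]
  have hGl : ∀ t, 0 ≤ t → t ≤ α → G t = 0 := by
    intro t ht0 ht
    simp only [hG]
    rw [intervalIntegral.integral_of_le ht0, integral_Ioc_eq_integral_Ioo]
    refine setIntegral_eq_zero_of_forall_eq_zero fun x hx => h0 x fun hx' => ?_
    linarith [hx.2, hx'.1]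
  have hGr : ∀ t, β ≤ t → t ≤ d → G t = 0 := by
    intro t ht0 ht
    have h1 : ∫ x in t..d, η x = 0 := by
      rw [intervalIntegral.integral_of_le ht]
      refine setIntegral_eq_zero_of_forall_eq_zero fun x hx => h0 x fun hx' => ?_
      linarith [hx.1, hx'.2]
    have h2 := intervalIntegral.integral_add_adjacent_intervals (μ := volume) (f := η)
      (a := 0) (b := t) (c := d) (hη.intervalIntegrable _ _) (hη.intervalIntegrable _ _)
    rw [h1, add_zero] at h2
    exact h2.trans hGd
  have hv : MemLp (fun x => η x / √(h x)) 2 (volume.restrict (Ioo 0 d)) := by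
    have hc : ContinuousOn (fun x => η x / √(h x)) (Ioo 0 d) :=
      hη.continuousOn.div W.sqrt_cont fun x hx => (sqrt_pos.2 (W.pos x hx)).ne'
    obtain ⟨M, hM⟩ := isCompact_Icc.exists_bound_of_continuousOn (hc.mono hsub)
    refine MemLp.of_bound (hc.aestronglyMeasurable measurableSet_Ioo) (max M 0) ?_
    refine ae_of_all _ fun x => ?_
    by_cases hx : x ∈ Icc α β
    · exact (hM x hx).trans (le_max_left _ _)
    · simp [h0 x hx]
  set v : L2 d := hv.toLp with hvdef
  have hprim : ∀ t ∈ Icc 0 d, prim h v t = G t := by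
    intro t ht
    rw [hvdef, W.prim_toLp hv ht]
    simp only [prim, hG]
    rw [intervalIntegral.integral_of_le ht.1, intervalIntegral.integral_of_le ht.1,
      integral_Ioc_eq_integral_Ioo, integral_Ioc_eq_integral_Ioo]
    refine setIntegral_congr_fun measurableSet_Ioo fun x hx => ?_
    exact mul_div_cancel₀ _ (sqrt_pos.2 (W.pos x ⟨hx.1, hx.2.trans_le ht.2⟩)).ne'
  have key := hEL v (by rw [hprim d hdd, hGd])
  rw [hvdef, W.inner_toLp hv] at key
  have hL : dualForm d h u v = - ∫ x in Ioo 0 d, η x * pot d h u x := by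
    have e1 : dualForm d h u v = ∫ x in Icc α β, G x * (prim h u x / h x) := by
      rw [← setIntegral_eq_of_subset_of_forall_sdiff_eq_zero measurableSet_Ioo hsub]
      · refine setIntegral_congr_fun measurableSet_Ioo fun t ht => ?_
        beta_reduce
        rw [hprim t (Ioo_subset_Icc_self ht)]
        ring
      · intro x hx
        have : G x = 0 := by
          rcases le_total x α with h1 | h1
          · exact hGl x hx.1.1.le h1
          · exact hGr x (not_lt.1 fun h2 => hx.2 ⟨h1, h2.le⟩) hx.1.2.le
        simp [this]
    have e2 : ∫ x in Ioo 0 d, η x * pot d h u x = ∫ x in Icc α β, η x * pot d h u x :=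
      setIntegral_eq_of_subset_of_forall_sdiff_eq_zero measurableSet_Ioo hsub
        fun x hx => by simp [h0 x hx.2]
    rw [e1, e2, integral_Icc_eq_integral_Ioc, integral_Icc_eq_integral_Ioc,
      ← intervalIntegral.integral_of_le hαβ.le, ← intervalIntegral.integral_of_le hαβ.le,
      intervalIntegral.integral_mul_deriv_eq_deriv_mul (u' := η) (v := pot d h u)
        (fun x _ => hGder x) ?_ (hη.intervalIntegrable _ _) ?_,
      hGl α hα.le le_rfl, hGr β le_rfl hβ.le]
    · ring
    · rw [uIcc_of_le hαβ.le]
      exact fun x hx => W.pot_deriv u (hsub hx)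
    · refine ContinuousOn.intervalIntegrable ?_
      rw [uIcc_of_le hαβ.le]
      exact (W.quot_cont u).mono hsub
  have hi1 : IntegrableOn (fun x => u x * (η x / √(h x))) (Ioo 0 d) :=
    (Lp.memLp u).integrable_mul hv
  have hi2 : IntegrableOn (fun x => η x * pot d h u x) (Ioo 0 d) :=
    integrable_cutoff hα hβ ((W.pot_cont u).locallyIntegrableOn measurableSet_Ioo) hη h0
  have e3 : ∫ x in Ioo 0 d, η x * (κ * (u x / √(h x)) + pot d h u x) =
      κ * (∫ x in Ioo 0 d, u x * (η x / √(h x))) + ∫ x in Ioo 0 d, η x * pot d h u x := by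
    rw [← integral_const_mul, ← integral_add (hi1.const_mul κ) hi2]
    congr 1; ext x; ring
  rw [e3, ← key, hL]
  ring

/-- Du Bois-Reymond: the weak equation forces `κ u / √h` to agree almost everywhere with a
`C¹` function. -/
lemma regularity {u : L2 d} {κ : ℝ}
    (hEL : ∀ v : L2 d, prim h v d = 0 → dualForm d h u v = κ * ⟪u, v⟫_ℝ) :
    ∃ c, ∀ᵐ x, x ∈ Ioo 0 d → κ * (u x / √(h x)) + pot d h u x = c := by
  have hd := W.d_pos
  set w : ℝ → ℝ := fun x => κ * (u x / √(h x)) + pot d h u x with hw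
  have hwL : LocallyIntegrableOn w (Ioo 0 d) := by
    refine LocallyIntegrableOn.add ?_ ((W.pot_cont u).locallyIntegrableOn measurableSet_Ioo)
    exact (W.locInt_quot u).continuousOn_mul continuousOn_const isOpen_Ioo.isLocallyClosed
  -- a fixed density `ρ`, so that `g - (∫ g) ρ` has mean zero for every test function `g`
  let b : ContDiffBump (d / 2) := ⟨d / 4, d / 3, by linarith, by linarith⟩
  set ρ : ℝ → ℝ := b.normed volume with hρ
  have hρc : Continuous ρ := b.continuous_normed
  have hρs : tsupport ρ ⊆ Ioo 0 d := by
    rw [hρ, b.tsupport_normed_eq, Real.closedBall_eq_Icc]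
    intro x hx
    have h1 : d / 2 - d / 3 ≤ x := hx.1
    have h2 : x ≤ d / 2 + d / 3 := hx.2
    exact ⟨by linarith, by linarith⟩
  have hρi : ∫ x in Ioo 0 d, ρ x = 1 := by
    rw [setIntegral_eq_integral_of_forall_compl_eq_zero, hρ, b.integral_normed]
    exact fun x hx => image_eq_zero_of_notMem_tsupport fun h => hx (hρs h)
  set c := ∫ x in Ioo 0 d, ρ x * w x with hc
  refine ⟨c, ?_⟩
  have := isOpen_Ioo.ae_eq_zero_of_integral_contDiff_smul_eq_zero (U := Ioo 0 d) (μ := volume)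
    (f := fun x => w x - c) ?_ ?_
  · filter_upwards [this] with x hx hxd
    exact sub_eq_zero.1 (hx hxd)
  · exact hwL.sub (continuousOn_const.locallyIntegrableOn measurableSet_Ioo)
  · intro g hg hgc hgs
    obtain ⟨α, β, hα, hαβ, hβ, hsub⟩ := exists_Icc_of_compact hd
      (hgc.isCompact.union (b.hasCompactSupport_normed (μ := volume)).isCompact)
      (union_subset hgs hρs)
    have hg0 : ∀ x ∉ Icc α β, g x = 0 := fun x hx =>
      image_eq_zero_of_notMem_tsupport fun h => hx (hsub (Or.inl h))
    have hρ0 : ∀ x ∉ Icc α β, ρ x = 0 := fun x hx =>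
      image_eq_zero_of_notMem_tsupport fun h => hx (hsub (Or.inr h))
    have hgcont := hg.continuous
    have hIg : IntegrableOn g (Ioo 0 d) :=
      (hgcont.integrableOn_Icc (a := 0) (b := d)).mono_set Ioo_subset_Icc_self
    have hIρ : IntegrableOn ρ (Ioo 0 d) :=
      (hρc.integrableOn_Icc (a := 0) (b := d)).mono_set Ioo_subset_Icc_self
    have hIgw := integrable_cutoff hα hβ hwL hgcont hg0
    have hIρw := integrable_cutoff hα hβ hwL hρc hρ0
    set m := ∫ x in Ioo 0 d, g x with hm
    have key := W.test_eta hEL hα hαβ hβ (η := fun x => g x - m * ρ x) (by fun_prop)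
      (fun x hx => by simp [hg0 x hx, hρ0 x hx]) (by
        rw [integral_sub hIg (hIρ.const_mul m), integral_const_mul, hρi]; ring)
    have e1 : ∫ x in Ioo 0 d, (g x - m * ρ x) * (κ * (u x / √(h x)) + pot d h u x) =
        (∫ x in Ioo 0 d, g x * w x) - m * c := by
      rw [hc, ← integral_const_mul, ← integral_sub hIgw (hIρw.const_mul m)]
      congr 1; ext x; simp only [hw]; ring
    rw [e1] at key
    rw [← setIntegral_eq_integral_of_forall_compl_eq_zero (s := Ioo 0 d)]
    · have e2 : ∫ x in Ioo 0 d, g x • (w x - c) = (∫ x in Ioo 0 d, g x * w x) - m * c := by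
        rw [hm, ← integral_mul_const, ← integral_sub hIgw (hIg.mul_const c)]
        congr 1; ext x; simp only [smul_eq_mul]; ring
      rw [e2, key]
    · intro x hx
      rw [image_eq_zero_of_notMem_tsupport fun h => hx (hgs h), zero_smul]

end Weight

/-! ### The extremal function -/

namespace Weight

variable {d C : ℝ} {h : ℝ → ℝ} (W : Weight d h C)
include W

/-- The hypotheses on the weight are symmetric under `x ↦ d - x`. -/
lemma reflect : Weight d (fun x => h (d - x)) C where
  d_pos := W.d_pos
  pos x hx := W.pos _ ⟨by linarith [hx.2], by linarith [hx.1]⟩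
  cont := W.cont.comp (by fun_prop) fun x hx => ⟨by linarith [hx.2], by linarith [hx.1]⟩
  left s t hs hst ht := W.right _ _ (by linarith) (by linarith) (by linarith)
  right s t ht hts hs := W.left _ _ (by linarith) (by linarith) (by linarith)

/-- A pair `F' = h φ`, `φ' = -λ F / h` with the Cauchy–Schwarz bound at the left end has
`F / h → 0` there. -/
lemma decay_left {lam A : ℝ} {φ F : ℝ → ℝ} (hlam : 0 ≤ lam)
    (hφ : ∀ t ∈ Ioo 0 d, HasDerivAt φ (-lam * F t / h t) t)
    (hF : ∀ t ∈ Ioo 0 d, HasDerivAt F (h t * φ t) t) (hA : 0 ≤ A)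
    (hFA : ∀ t ∈ Ioo 0 d, |F t| ≤ A * √(∫ x in (0:ℝ)..t, h x)) :
    Tendsto (fun t => F t / h t) (𝓝[>] 0) (𝓝 0) := by
  have hd := W.d_pos
  have h0 : (0:ℝ) ∈ Icc 0 d := ⟨le_rfl, hd.le⟩
  refine left_decay (M := fun t => ∫ x in (0:ℝ)..t, h x) W hlam
    (fun t ht => W.primitive_deriv W.integrable_h W.cont h0 ht) ?_ ?_
    (fun t ht0 ht => W.mass_left ht0 ht) hφ hF hA hFA
  · intro t ht
    exact intervalIntegral.intervalIntegral_pos_of_pos_on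
      (W.intervalIntegrable_of W.integrable_h h0 (Ioo_subset_Icc_self ht))
      (fun x hx => W.pos x ⟨hx.1, hx.2.trans ht.2⟩) ht.1
  · have h1 := (W.primitive_cont W.integrable_h) 0 h0
    simp only [ContinuousWithinAt, intervalIntegral.integral_same] at h1
    refine h1.mono_left ?_
    rw [← nhdsWithin_Ioo_eq_nhdsGT hd]
    exact nhdsWithin_mono _ Ioo_subset_Icc_self

/-- `decay_left` for the reflected data `φ (d - t)` and `-F (d - t)`. -/
lemma decay_right {lam A : ℝ} {φ F : ℝ → ℝ} (hlam : 0 ≤ lam)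
    (hφ : ∀ t ∈ Ioo 0 d, HasDerivAt φ (-lam * F t / h t) t)
    (hF : ∀ t ∈ Ioo 0 d, HasDerivAt F (h t * φ t) t) (hA : 0 ≤ A)
    (hFA : ∀ t ∈ Ioo 0 d, |F t| ≤ A * √(∫ x in t..d, h x)) :
    Tendsto (fun t => F t / h t) (𝓝[<] d) (𝓝 0) := by
  have hd := W.d_pos
  have hmem : ∀ t ∈ Ioo 0 d, d - t ∈ Ioo 0 d := fun t ht =>
    ⟨by linarith [ht.2], by linarith [ht.1]⟩
  have key := W.reflect.decay_left (φ := fun t => φ (d - t)) (F := fun t => -F (d - t)) hlam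
    (fun t ht => by
      refine ((hφ _ (hmem t ht)).comp_const_sub d t).congr_deriv ?_
      ring)
    (fun t ht => by
      refine (((hF _ (hmem t ht)).comp_const_sub d t).neg).congr_deriv ?_
      ring) hA
    (fun t ht => by
      rw [abs_neg, intervalIntegral.integral_comp_sub_left (fun x => h x) d, sub_zero]
      exact hFA _ (hmem t ht))
  have ht : Tendsto (fun x : ℝ => d - x) (𝓝[<] d) (𝓝[>] 0) := by
    refine tendsto_nhdsWithin_iff.2 ⟨?_, ?_⟩
    · have : Tendsto (fun x : ℝ => d - x) (𝓝 d) (𝓝 (d - d)) :=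
        (continuous_const.sub continuous_id).tendsto d
      rw [sub_self] at this
      exact this.mono_left nhdsWithin_le_nhds
    · filter_upwards [self_mem_nhdsWithin] with x hx
      exact sub_pos.2 (mem_Iio.1 hx)
  have h2 := (key.comp ht).neg
  rw [neg_zero] at h2
  refine h2.congr fun x => ?_
  simp only [Function.comp, sub_sub_cancel]
  ring

/-- A function `q` continuous on `(0,d)` and tending to `0` at both ends extends continuously
to `ℝ`. -/
lemma exists_extend {q : ℝ → ℝ} (hq : ContinuousOn q (Ioo 0 d))
    (h0 : Tendsto q (𝓝[>] 0) (𝓝 0)) (h1 : Tendsto q (𝓝[<] d) (𝓝 0)) :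
    ∃ p : ℝ → ℝ, Continuous p ∧ EqOn p q (Ioo 0 d) := by
  have hd := W.d_pos
  have hc := continuousOn_Icc_extendFrom_Ioo hq h0 h1
  refine ⟨IccExtend hd.le ((Icc 0 d).restrict (extendFrom (Ioo 0 d) q)),
    hc.restrict.Icc_extend', fun x hx => ?_⟩
  rw [IccExtend_of_mem _ _ (Ioo_subset_Icc_self hx)]
  refine extendFrom_eq (subset_closure hx) ?_
  exact hq x hx

/-- The extremal `φ` together with its flux `F`, where `F' = h φ` and `h φ' = -F / κ`. -/
lemma exists_eigenfunction : ∃ κ : ℝ, 0 < κ ∧ ∃ φ F : ℝ → ℝ, ContDiff ℝ 1 φ ∧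
    F 0 = 0 ∧ F d = 0 ∧ ContinuousOn F (Icc 0 d) ∧
    (∀ t ∈ Ioo 0 d, HasDerivAt F (h t * φ t) t) ∧
    (∀ t ∈ Ioo 0 d, h t * deriv φ t = -F t / κ) ∧
    (∫ x in (0:ℝ)..d, h x * φ x ^ 2) = 1 ∧
    ∀ f : ℝ → ℝ, ContDiff ℝ 1 f → (∫ x in (0:ℝ)..d, h x * f x) = 0 →
      ∫ x in (0:ℝ)..d, h x * f x ^ 2 ≤ κ * ∫ x in (0:ℝ)..d, h x * deriv f x ^ 2 := by
  have hd := W.d_pos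
  have h0d : (0:ℝ) ∈ Icc 0 d := ⟨le_rfl, hd.le⟩
  have hdd : d ∈ Icc 0 d := ⟨hd.le, le_rfl⟩
  have hmid : d / 2 ∈ Ioo 0 d := ⟨by linarith, by linarith⟩
  obtain ⟨u, κ, hu1, hud, hQ, hle⟩ := W.exists_maximizer
  have hκ := W.kappa_pos hle
  have hun : ‖u‖ ^ 2 = 1 := by
    have h1 := hle u hud
    rw [hQ] at h1
    have h2 : ‖u‖ ^ 2 ≤ 1 := pow_le_one₀ (norm_nonneg _) hu1
    nlinarith
  obtain ⟨c, hc⟩ := W.regularity (u := u) (κ := κ) fun v hv =>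
    W.euler_lagrange_dual hud (by rw [hQ, hun, mul_one]) hle hv
  set φ₀ : ℝ → ℝ := fun t => (c - pot d h u t) / κ with hφ₀
  set F : ℝ → ℝ := prim h u with hF
  have hφ₀d : ∀ t ∈ Ioo 0 d, HasDerivAt φ₀ (-(1 / κ) * F t / h t) t := fun t ht => by
    refine (((W.pot_deriv u ht).const_sub c).div_const κ).congr_deriv ?_
    ring
  have hφ₀c : ContinuousOn φ₀ (Ioo 0 d) := fun t ht =>
    (hφ₀d t ht).continuousAt.continuousWithinAt
  have hu : ∀ᵐ x, x ∈ Ioo 0 d → u x = √(h x) * φ₀ x := by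
    filter_upwards [hc] with x hx hxd
    have hs := sqrt_pos.2 (W.pos x hxd)
    have := hx hxd
    simp only [hφ₀]
    rw [← this]
    field_simp
    ring
  have hsu : ∀ᵐ x, x ∈ Ioo 0 d → √(h x) * u x = h x * φ₀ x := by
    filter_upwards [hu] with x hx hxd
    rw [hx hxd, ← mul_assoc, mul_self_sqrt (W.pos x hxd).le]
  have hint : IntegrableOn (fun x => h x * φ₀ x) (Ioo 0 d) :=
    (W.integrable_sqrt_mul (Lp.memLp u)).congr ((ae_restrict_iff' measurableSet_Ioo).2 hsu)
  have hFeq : ∀ t ∈ Icc 0 d, F t = ∫ x in (0:ℝ)..t, h x * φ₀ x := by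
    intro t ht
    simp only [hF, prim]
    have hne : ∀ᵐ x : ℝ, x ≠ d := by simp [ae_iff, measure_singleton]
    refine intervalIntegral.integral_congr_ae ?_
    filter_upwards [hsu, hne] with x hx hxd hxt
    rw [uIoc_of_le ht.1] at hxt
    exact hx ⟨hxt.1, lt_of_le_of_ne (hxt.2.trans ht.2) hxd⟩
  have hFd : ∀ t ∈ Ioo 0 d, HasDerivAt F (h t * φ₀ t) t := by
    intro t ht
    refine (W.primitive_deriv hint (W.cont.mul hφ₀c) h0d ht).congr_of_eventuallyEq ?_
    filter_upwards [isOpen_Ioo.mem_nhds ht] with s hs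
    exact hFeq s (Ioo_subset_Icc_self hs)
  have hFc : ContinuousOn F (Icc 0 d) := W.prim_continuousOn (Lp.memLp u)
  have hlam : 0 ≤ 1 / κ := by positivity
  have hbl : ∀ t ∈ Ioo 0 d, |F t| ≤ 1 * √(∫ x in (0:ℝ)..t, h x) := by
    intro t ht
    rw [one_mul]
    refine Real.abs_le_sqrt ?_
    have := W.cauchy_schwarz le_rfl ht.1.le ht.2.le u
    rwa [hun, mul_one] at this
  have hbr : ∀ t ∈ Ioo 0 d, |F t| ≤ 1 * √(∫ x in t..d, h x) := by
    intro t ht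
    rw [one_mul]
    refine Real.abs_le_sqrt ?_
    have := W.cauchy_schwarz ht.1.le ht.2.le le_rfl u
    rwa [hun, mul_one, ← neg_sq, ← W.prim_add_right hud (Ioo_subset_Icc_self ht)] at this
  have hl := (W.decay_left hlam hφ₀d hFd zero_le_one hbl).const_mul (-(1 / κ))
  have hr := (W.decay_right hlam hφ₀d hFd zero_le_one hbr).const_mul (-(1 / κ))
  rw [mul_zero] at hl hr
  obtain ⟨p, hpc, hp⟩ := W.exists_extend (continuousOn_const.mul (W.quot_cont u)) hl hr
  -- `φ₀` is meaningful only on `(0,d)`; integrating the extended derivative gives a `C¹` function on `ℝ`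
  set φ : ℝ → ℝ := fun t => φ₀ (d / 2) + ∫ x in (d / 2)..t, p x with hφ
  have hφd : ∀ t, HasDerivAt φ (p t) t := fun t =>
    (intervalIntegral.integral_hasDerivAt_right (hpc.intervalIntegrable _ _)
      (hpc.stronglyMeasurableAtFilter _ _) hpc.continuousAt).const_add _
  have hderiv : deriv φ = p := funext fun t => (hφd t).deriv
  have hφeq : ∀ t ∈ Ioo 0 d, φ t = φ₀ t := by
    intro t ht
    have h1 : ∫ x in (d / 2)..t, p x = -(1 / κ) * pot d h u t := by
      rw [pot, ← intervalIntegral.integral_const_mul]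
      refine intervalIntegral.integral_congr fun x hx => hp ?_
      exact ⟨(lt_min hmid.1 ht.1).trans_le hx.1, hx.2.trans_lt (max_lt hmid.2 ht.2)⟩
    simp only [hφ, hφ₀]
    rw [h1]
    simp only [pot, intervalIntegral.integral_same]
    ring
  refine ⟨κ, hκ, φ, F, ?_, ?_, hud, hFc, ?_, ?_, ?_, fun f hf hf0 => W.poincare hκ hle hf hf0⟩
  · rw [contDiff_one_iff_deriv, hderiv]
    exact ⟨fun t => (hφd t).differentiableAt, hpc⟩
  · simp [hF, prim]
  · intro t ht
    rw [hφeq t ht]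
    exact hFd t ht
  · intro t ht
    have := W.pos t ht
    rw [hderiv, hp ht]
    change h t * (-(1 / κ) * (F t / h t)) = -F t / κ
    field_simp
  · rw [W.integral_eq_Ioo, ← hun, ← real_inner_self_eq_norm_sq, L2.inner_def]
    refine integral_congr_ae ?_
    filter_upwards [(ae_restrict_iff' measurableSet_Ioo).2 hu,
      ae_restrict_mem measurableSet_Ioo] with x hx hxd
    rw [hφeq x hxd, hx]
    simp only [RCLike.inner_apply, conj_trivial]
    linear_combination -φ₀ x ^ 2 * mul_self_sqrt (W.pos x hxd).le

/-- The weak Euler–Lagrange equation follows from `F' = h φ` and `h φ' = -F / κ` by one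
integration by parts; the boundary terms vanish since `F 0 = F d = 0`. -/
lemma weak_equation {κ : ℝ} {φ F v : ℝ → ℝ} (hφ : ContDiff ℝ 1 φ)
    (hF0 : F 0 = 0) (hFd : F d = 0) (hFc : ContinuousOn F (Icc 0 d))
    (hF : ∀ t ∈ Ioo 0 d, HasDerivAt F (h t * φ t) t)
    (hφ' : ∀ t ∈ Ioo 0 d, h t * deriv φ t = -F t / κ) (hv : ContDiff ℝ 1 v) :
    ∫ x in (0:ℝ)..d, deriv φ x * deriv v x * h x = 1 / κ * ∫ x in (0:ℝ)..d, φ x * v x * h x := by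
  have hd := W.d_pos
  have hibp : ∫ x in (0:ℝ)..d, F x * deriv v x =
      F d * v d - F 0 * v 0 - ∫ x in (0:ℝ)..d, h x * φ x * v x := by
    refine intervalIntegral.integral_mul_deriv_eq_deriv_mul_of_hasDerivAt
      (by rwa [uIcc_of_le hd.le]) hv.continuous.continuousOn ?_
      (fun x _ => (hv.differentiable one_ne_zero x).hasDerivAt) ?_
      ((hv.continuous_deriv le_rfl).intervalIntegrable _ _)
    · rwa [min_eq_left hd.le, max_eq_right hd.le]
    · exact W.intervalIntegrable_of (W.integrable_h_mul hφ.continuous) ⟨le_rfl, hd.le⟩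
        ⟨hd.le, le_rfl⟩
  have e1 : ∫ x in (0:ℝ)..d, deriv φ x * deriv v x * h x =
      -(1 / κ) * ∫ x in (0:ℝ)..d, F x * deriv v x := by
    rw [W.integral_eq_Ioo, W.integral_eq_Ioo, ← integral_const_mul]
    refine setIntegral_congr_fun measurableSet_Ioo fun x hx => ?_
    linear_combination deriv v x * hφ' x hx
  have e2 : ∫ x in (0:ℝ)..d, φ x * v x * h x = ∫ x in (0:ℝ)..d, h x * φ x * v x := by
    congr 1; ext x; ring
  rw [e1, hibp, hF0, hFd, e2]
  ring

end Weight

/-- Lemma A.1: let `n ≥ 2`, `d > 0` and `h : [0,d] → [0,∞)` with `h^{1/(n-1)}` concave and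
`h` not identically zero.  Consider the class `H` of admissible functions `f` with
`∫₀^d h f = 0`, and the Rayleigh quotient `R(f) = ∫₀^d h (f')² / ∫₀^d h f²`.  Then there
is a minimizer `φ ∈ H \ {0}` of `R`, and it satisfies the weak Euler–Lagrange equation
`∫₀^d φ' v' h = R(φ) ∫₀^d φ v h` for every `v ∈ W^{1,2}(0,d)`. -/
theorem statement5 (n : ℕ) (d : ℝ) (h : ℝ → ℝ)
    (hn : 2 ≤ n) (hd : 0 < d)
    (hnonneg : ∀ x ∈ Icc 0 d, 0 ≤ h x)
    (hconc : ConcaveOn ℝ (Icc 0 d) (fun x => h x ^ ((1 : ℝ) / ((n : ℝ) - 1))))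
    (hnz : ∃ x ∈ Icc 0 d, h x ≠ 0) :
    ∃ φ : ℝ → ℝ, ContDiff ℝ 1 φ ∧
      (∫ x in (0:ℝ)..d, h x * φ x) = 0 ∧
      (∫ x in (0:ℝ)..d, h x * (φ x) ^ 2) ≠ 0 ∧
      (∀ f : ℝ → ℝ, ContDiff ℝ 1 f → (∫ x in (0:ℝ)..d, h x * f x) = 0 →
        (∫ x in (0:ℝ)..d, h x * (f x) ^ 2) ≠ 0 →
        (∫ x in (0:ℝ)..d, h x * (deriv φ x) ^ 2) / (∫ x in (0:ℝ)..d, h x * (φ x) ^ 2) ≤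
          (∫ x in (0:ℝ)..d, h x * (deriv f x) ^ 2) / (∫ x in (0:ℝ)..d, h x * (f x) ^ 2)) ∧
      (∀ v : ℝ → ℝ, ContDiff ℝ 1 v →
        (∫ x in (0:ℝ)..d, deriv φ x * deriv v x * h x) =
          ((∫ x in (0:ℝ)..d, h x * (deriv φ x) ^ 2) /
              (∫ x in (0:ℝ)..d, h x * (φ x) ^ 2)) *
            ∫ x in (0:ℝ)..d, φ x * v x * h x) := by
  have W := weight_of_concave n d h hn hd hnonneg hconc hnz
  obtain ⟨κ, hκ, φ, F, hφ, hF0, hFd, hFc, hF, hφ', hnorm, hpoin⟩ := W.exists_eigenfunction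
  have hEL := fun v hv => W.weak_equation (κ := κ) (v := v) hφ hF0 hFd hFc hF hφ' hv
  have hR : ∫ x in (0:ℝ)..d, h x * deriv φ x ^ 2 = 1 / κ := by
    have e1 : ∫ x in (0:ℝ)..d, h x * deriv φ x ^ 2 =
        ∫ x in (0:ℝ)..d, deriv φ x * deriv φ x * h x := by congr 1; ext x; ring
    have e2 : ∫ x in (0:ℝ)..d, φ x * φ x * h x = ∫ x in (0:ℝ)..d, h x * φ x ^ 2 := by
      congr 1; ext x; ring
    rw [e1, hEL φ hφ, e2, hnorm, mul_one]
  refine ⟨φ, hφ, ?_, by rw [hnorm]; exact one_ne_zero, ?_, ?_⟩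
  · rw [intervalIntegral.integral_eq_sub_of_hasDerivAt_of_le hd.le hFc hF, hF0, hFd, sub_zero]
    exact W.intervalIntegrable_of (W.integrable_h_mul hφ.continuous) ⟨le_rfl, hd.le⟩
      ⟨hd.le, le_rfl⟩
  · intro f hf hf0 hfne
    have hnn : 0 ≤ ∫ x in (0:ℝ)..d, h x * f x ^ 2 :=
      intervalIntegral.integral_nonneg hd.le fun x hx => mul_nonneg (hnonneg x hx) (sq_nonneg _)
    have hpos := lt_of_le_of_ne hnn (Ne.symm hfne)
    rw [hR, hnorm, div_one, div_le_div_iff₀ hκ hpos]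
    linarith [hpoin f hf hf0]
  · intro v hv
    rw [hR, hnorm, div_one]
    exact hEL v hv
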